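/- Let γ : ℝ → [0,∞] be a measurable, symmetric, locally integrable function and let μ be a tempered Borel measure on ℝ^d satisfying Dalang's condition ∫ (1+|ξ|²)^{-1} μ(dξ) < ∞, whose Fourier transform in the Parseval sense is a locally integrable function f : ℝ^d → [0,∞] with f(x) < ∞ for every x ≠ 0. For t > 0 and n ≥ 1 define α_n(t) := (2π)^{-nd} ∫_{ℝ^{nd}} ∫_{[0,t]^n} ∫_{[0,t]^n} ∏_{j=1}^n γ(t_j − s_j) · Φ_n(t; t₁,…,t_n; ξ₁,…,ξ_n) · Φ_n(t; s₁,…,s_n; ξ₁,…,ξ_n) dt₁…dt_n ds₁…ds_n μ(dξ₁)…μ(dξ_n), where, for (t₁,…,t_n) ∈ [0,t]^n with sorting permutation ρ (i.e. t_{ρ(1)} ≤ … ≤ t_{ρ(n)}, and t_{ρ(n+1)} := t), Φ_n(t; t₁,…,t_n; ξ₁,…,ξ_n) := ∏_{j=1}^n sin((t_{ρ(j+1)} − t_{ρ(j)}) |ξ_{ρ(1)} + … + ξ_{ρ(j)}|) / |ξ_{ρ(1)} + … + ξ_{ρ(j)}| (with sin(a r)/r interpreted as a when r = 0). Then for every t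 > 0, the series ∑_{n ≥ 1} α_n(t)/n! converges, i.e. ∑_{n ≥ 1} α_n(t)/n! < ∞. -/

import Mathlib

/-!
The coefficients `α_n(t)` grow at most geometrically, `|α_n(t)| ≤ 2 C^n`, so the series is dominated by
the exponential series of `C`.

For `|a| ≤ t` one has `(sin(ar)/r)² ≤ (1+t²)/(1+r²)`. With `w(η) = 1/(1+|η|²)`, the square of `Φ_n` is
therefore at most `(1+t²)^n` times the product of the weights `w` at the partial sums of the frequencies
in the order of their times, and `|Φ_n Φ_n'| ≤ Φ_n² + Φ_n'²` separates the two time vectors.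

The central fact is that `∫ w(ξ+η) μ(dξ) ≤ K := ∫ w dμ` for every `η` (`lintegral_dw_shift_le`). Writing
`w(η) = ∫_0^∞ e^{-s} e^{-s|η|²} ds` reduces it to Gaussians. The function `ξ ↦ e^{-s|ξ+η|²}` is, up to
a positive constant, the Fourier transform of `e^{-i⟨η,x⟩} e^{-b|x|²}` with `b = 1/(4s)`, so Parseval
turns its `μ`-integral into an integral against the nonnegative function `f`, where the modulation can
only decrease the absolute value (`lintegral_gauss_shift_le`). Dalang's condition says that `K < ∞`.

For fixed times, integrating out the frequencies one at a time, the one with the latest time first,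
bounds the integral of the product of weights by `K^n` (`lintegral_chain_le`,
`lintegral_chain_perm_le`). What remains is the integral of `∏ γ(t_j - s_j)` over two copies of the box,
at most `(tG)^n` with `G = ∫_{-t}^t γ < ∞` (`lintegral_gamma_box_le`). Exchanging the time and frequency
integrals needs joint measurability, which follows from that of the sorting permutation
(`measurableSet_sort_eq`). Altogether `C = (1+t²) G t K` (`abs_alphaHAM_le`).
-/

open MeasureTheory Real
open scoped ENNReal RealInnerProductSpace

noncomputable section

/-- Euclidean space `ℝ^d`. -/
abbrev Ed (d : ℕ) := EuclideanSpace ℝ (Fin d)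

/-- Fourier transform on `ℝ^d`: `ℱφ(ξ) = ∫ e^{-i ξ·x} φ(x) dx`. -/
def FTd (d : ℕ) (φ : Ed d → ℂ) (ξ : Ed d) : ℂ :=
  ∫ x : Ed d, Complex.exp (-(Complex.I * ((⟪ξ, x⟫ : ℝ) : ℂ))) * φ x

/-- A Borel measure on `ℝ^d` is tempered if `∫ (1+|ξ|²)^{-k} dμ < ∞` for some `k ∈ ℕ`. -/
def IsTempered (d : ℕ) (μ : Measure (Ed d)) : Prop :=
  ∃ k : ℕ, ∫⁻ ξ, ENNReal.ofReal ((1 + ‖ξ‖ ^ 2) ^ (-(k : ℝ))) ∂μ < ⊤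

/-- Local integrability for `[0,∞]`-valued functions on `ℝ^d`. -/
def LocIntENN (d : ℕ) (g : Ed d → ℝ≥0∞) : Prop :=
  ∀ s : Set (Ed d), IsCompact s → ∫⁻ x in s, g x < ⊤

/-- `g` is the Fourier transform of `μ` in the Parseval sense:
`∫ φ(x) g(x) dx = (2π)^{-d} ∫ ℱφ(ξ) μ(dξ)` for every Schwartz function `φ` on `ℝ^d`. -/
def ParsevalFT (d : ℕ) (g : Ed d → ℝ≥0∞) (μ : Measure (Ed d)) : Prop :=
  ∀ φ : SchwartzMap (Ed d) ℂ,
    ∫ x, φ x * (((g x).toReal : ℝ) : ℂ) =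
      (((2 * π) ^ d : ℝ)⁻¹ : ℂ) * ∫ ξ, FTd d (fun y => φ y) ξ ∂μ

/-- `sinc a r = sin(a r)/r`, interpreted as `a` when `r = 0`. -/
def sinc (a r : ℝ) : ℝ := if r = 0 then a else Real.sin (a * r) / r

/-- Local integrability for `[0,∞]`-valued functions on `ℝ`. -/
def LocIntENN1 (g : ℝ → ℝ≥0∞) : Prop :=
  ∀ s : Set ℝ, IsCompact s → ∫⁻ x in s, g x < ⊤

/-- The box `[0,t]^n`. -/
def TBox (n : ℕ) (t : ℝ) : Set (Fin n → ℝ) :=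
  Set.univ.pi fun _ : Fin n => Set.Icc (0 : ℝ) t

/-- The wave-kernel factor `Φ_n(t; t₁,…,t_n; ξ₁,…,ξ_n)`: with `ρ` the sorting permutation
of `(t₁,…,t_n)` (so that `t_{ρ(1)} ≤ … ≤ t_{ρ(n)}`, and `t_{ρ(n+1)} := t`),
`Φ_n = ∏_{j=1}^n sin((t_{ρ(j+1)} − t_{ρ(j)}) |ξ_{ρ(1)}+…+ξ_{ρ(j)}|)/|ξ_{ρ(1)}+…+ξ_{ρ(j)}|`,
where `sin(a r)/r` is interpreted as `a` when `r = 0`. -/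
def Phi (d n : ℕ) (t : ℝ) (ts : Fin n → ℝ) (ξ : Fin n → Ed d) : ℝ :=
  ∏ j : Fin n,
    sinc ((if hj : (j : ℕ) + 1 < n then ts (Tuple.sort ts ⟨(j : ℕ) + 1, hj⟩) else t)
        - ts (Tuple.sort ts j))
      ‖∑ i ∈ Finset.Iic j, ξ (Tuple.sort ts i)‖

/-- The `n`-th chaos coefficient `α_n(t)` of the hyperbolic Anderson model:
`α_n(t) = (2π)^{-nd} ∫_{ℝ^{nd}} ∫_{[0,t]^n} ∫_{[0,t]^n} ∏_j γ(t_j−s_j) ·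
Φ_n(t;𝐭;ξ) Φ_n(t;𝐬;ξ) d𝐭 d𝐬 μ(dξ₁)…μ(dξ_n)`. -/
def alphaHAM (d n : ℕ) (γ : ℝ → ℝ≥0∞) (μ : Measure (Ed d)) (t : ℝ) : ℝ :=
  ((2 * π) ^ (n * d))⁻¹ *
    ∫ ξ : Fin n → Ed d,
      (∫ ts in TBox n t, ∫ ss in TBox n t,
        (∏ j : Fin n, (γ (ts j - ss j)).toReal) * (Phi d n t ts ξ * Phi d n t ss ξ))
    ∂(Measure.pi fun _ : Fin n => μ)

/-! ### Modulated Gaussians as Schwartz functions -/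

lemma norm_iteratedFDeriv_cexp_mul (c : ℂ) (n : ℕ) (s : ℝ) :
    ‖iteratedFDeriv ℝ n (fun s : ℝ => Complex.exp (c * s)) s‖
      = ‖c‖ ^ n * Real.exp (c.re * s) := by
  have h : ∀ n : ℕ, iteratedDeriv n (fun s : ℝ => Complex.exp (c * s))
      = fun s : ℝ => c ^ n * Complex.exp (c * s) := by
    intro n
    induction n with
    | zero => simp
    | succ k ih =>
      rw [iteratedDeriv_succ, ih]
      funext x
      have h1 : HasDerivAt (fun s : ℝ => c * (s : ℂ)) (c * 1) x :=
        (Complex.ofRealCLM.hasDerivAt (x := x)).const_mul c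
      rw [(h1.cexp.const_mul (c ^ k)).deriv]
      ring
  rw [norm_iteratedFDeriv_eq_norm_iteratedDeriv, h, norm_mul, norm_pow, Complex.norm_exp]
  simp

lemma contDiff_cexp_mul (c : ℂ) {N : WithTop ℕ∞} :
    ContDiff ℝ N (fun s : ℝ => Complex.exp (c * s)) :=
  (contDiff_const.mul Complex.ofRealCLM.contDiff).cexp

lemma hasTemperateGrowth_cexp_I :
    Function.HasTemperateGrowth (fun s : ℝ => Complex.exp (-Complex.I * s)) := by
  refine ⟨contDiff_cexp_mul _, fun n => ⟨0, 1, fun x => ?_⟩⟩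
  rw [norm_iteratedFDeriv_cexp_mul]
  simp

/-- A Gaussian beats every polynomial, with an explicit constant: `(1 + r)^N ≤ N! e^{1+r}`, and
`r - b r²` is at most `1/(4b)`. -/
lemma pow_mul_exp_neg_sq_le {b : ℝ} (hb : 0 < b) (N : ℕ) {r : ℝ} (hr : 0 ≤ r) :
    (1 + r) ^ N * Real.exp (-b * r ^ 2) ≤ N.factorial * Real.exp (1 + 1 / (4 * b)) := by
  have h1 : (1 + r) ^ N ≤ N.factorial * Real.exp (1 + r) := by
    have := Real.pow_div_factorial_le_exp (1 + r) (by positivity) N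
    rw [div_le_iff₀ (by positivity)] at this
    linarith
  calc (1 + r) ^ N * Real.exp (-b * r ^ 2)
      ≤ N.factorial * Real.exp (1 + r) * Real.exp (-b * r ^ 2) := by gcongr
    _ = N.factorial * Real.exp (1 + r + -b * r ^ 2) := by rw [mul_assoc, ← Real.exp_add]
    _ ≤ _ := by
      gcongr ?_ * Real.exp ?_
      have : r - b * r ^ 2 ≤ 1 / (4 * b) := by
        rw [le_div_iff₀ (by positivity)]
        nlinarith [sq_nonneg (2 * b * r - 1)]
      linarith

/-- The Gaussian `x ↦ e^{-b|x|²}` as a complex Schwartz function. -/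
def gaussSchwartz (d : ℕ) (b : ℝ) (hb : 0 < b) : SchwartzMap (Ed d) ℂ where
  toFun x := Complex.exp (((-b : ℝ) : ℂ) * ((‖x‖ ^ 2 : ℝ) : ℂ))
  smooth' := (contDiff_cexp_mul _).comp (contDiff_norm_sq ℝ)
  decay' := by
    intro k n
    obtain ⟨l, C, hC, h⟩ :=
      (Function.hasTemperateGrowth_norm_sq (Ed d)).norm_iteratedFDeriv_le_uniform n
    set L := max 1 C with hL
    have hL1 : 1 ≤ L := le_max_left _ _
    refine ⟨n.factorial * (1 + b) ^ n * L ^ n *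
      ((k + l * n).factorial * Real.exp (1 + 1 / (4 * b))), fun x => ?_⟩
    -- Faà di Bruno bound for `s ↦ e^{-bs}` composed with `x ↦ |x|²`: the derivatives of the outer
    -- function are multiples of the Gaussian itself, those of the inner one grow polynomially.
    have hcomp := norm_iteratedFDeriv_comp_le (𝕜 := ℝ) (n := n) (N := n)
      (g := fun s : ℝ => Complex.exp (((-b : ℝ) : ℂ) * s)) (f := fun x : Ed d => ‖x‖ ^ 2)
      (contDiff_cexp_mul _) (contDiff_norm_sq ℝ) le_rfl x
      (C := (1 + b) ^ n * Real.exp (-b * ‖x‖ ^ 2)) (D := L * (1 + ‖x‖) ^ l) ?_ ?_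
    · change ‖x‖ ^ k * ‖iteratedFDeriv ℝ n ((fun s : ℝ => Complex.exp (((-b : ℝ) : ℂ) * s)) ∘
        (fun x : Ed d => ‖x‖ ^ 2)) x‖ ≤ _
      calc _ ≤ (1 + ‖x‖) ^ k * (n.factorial * ((1 + b) ^ n * Real.exp (-b * ‖x‖ ^ 2))
              * (L * (1 + ‖x‖) ^ l) ^ n) := by gcongr; linarith
        _ = n.factorial * (1 + b) ^ n * L ^ n *
            ((1 + ‖x‖) ^ (k + l * n) * Real.exp (-b * ‖x‖ ^ 2)) := by
          rw [pow_add, pow_mul]; ring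
        _ ≤ _ := by
          gcongr ?_ * ?_
          exact pow_mul_exp_neg_sq_le hb _ (norm_nonneg x)
    · intro i hi
      rw [norm_iteratedFDeriv_cexp_mul]
      simp only [Complex.ofReal_re]
      gcongr ?_ * ?_
      rw [Complex.norm_real, norm_neg, Real.norm_of_nonneg hb.le]
      calc b ^ i ≤ (1 + b) ^ i := by gcongr; linarith
        _ ≤ _ := pow_le_pow_right₀ (by linarith) hi
    · intro i hi hin
      have hx1 : 1 ≤ (1 + ‖x‖) ^ l := one_le_pow₀ (by linarith [norm_nonneg x])
      calc _ ≤ C * (1 + ‖x‖) ^ l := h i hin x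
        _ ≤ L * (1 + ‖x‖) ^ l := by gcongr; exact le_max_right _ _
        _ ≤ _ := le_self_pow₀ (by nlinarith) (by omega)

/-- The modulated Gaussian `x ↦ e^{-i⟨η,x⟩} e^{-b|x|²}` as a Schwartz function; its Fourier transform
is that of the Gaussian translated by `-η`. -/
def modGauss (d : ℕ) (b : ℝ) (hb : 0 < b) (η : Ed d) : SchwartzMap (Ed d) ℂ :=
  SchwartzMap.smulLeftCLM ℂ (fun x : Ed d => Complex.exp (-Complex.I * ((⟪η, x⟫ : ℝ) : ℂ)))
    (gaussSchwartz d b hb)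

lemma modGauss_apply (d : ℕ) (b : ℝ) (hb : 0 < b) (η x : Ed d) :
    modGauss d b hb η x = Complex.exp (-Complex.I * ((⟪η, x⟫ : ℝ) : ℂ)) *
      Complex.exp (((-b : ℝ) : ℂ) * ((‖x‖ ^ 2 : ℝ) : ℂ)) := by
  have h : Function.HasTemperateGrowth
      (fun x : Ed d => Complex.exp (-Complex.I * ((⟪η, x⟫ : ℝ) : ℂ))) :=
    hasTemperateGrowth_cexp_I.comp (Function.hasTemperateGrowth_inner_right η)
  rw [modGauss, SchwartzMap.smulLeftCLM_apply_apply h]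
  rfl

lemma norm_modGauss (d : ℕ) (b : ℝ) (hb : 0 < b) (η x : Ed d) :
    ‖modGauss d b hb η x‖ = Real.exp (-b * ‖x‖ ^ 2) := by
  rw [modGauss_apply, norm_mul, Complex.norm_exp, Complex.norm_exp,
    ← Complex.ofReal_mul, Complex.ofReal_re]
  simp

lemma modGauss_zero (d : ℕ) (b : ℝ) (hb : 0 < b) (x : Ed d) :
    modGauss d b hb 0 x = ((Real.exp (-b * ‖x‖ ^ 2) : ℝ) : ℂ) := by
  rw [modGauss_apply]
  simp

lemma FTd_modGauss (d : ℕ) (b : ℝ) (hb : 0 < b) (η ξ : Ed d) :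
    FTd d (fun y => modGauss d b hb η y) ξ =
      ((π : ℂ) / b) ^ (d / 2 : ℂ) * ((Real.exp (-(1 / (4 * b)) * ‖ξ + η‖ ^ 2) : ℝ) : ℂ) := by
  have h := GaussianFourier.integral_cexp_neg_mul_sq_norm_add (V := Ed d) (b := (b : ℂ))
    (by simpa using hb) (-Complex.I) (ξ + η)
  rw [finrank_euclideanSpace, Fintype.card_fin] at h
  have e : ((Real.exp (-(1 / (4 * b)) * ‖ξ + η‖ ^ 2) : ℝ) : ℂ)
      = Complex.exp ((-Complex.I) ^ 2 * (‖ξ + η‖ : ℂ) ^ 2 / (4 * b)) := by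
    push_cast
    congr 1
    rw [neg_sq, Complex.I_sq]
    ring
  rw [e, ← h, FTd]
  congr 1
  funext x
  rw [modGauss_apply, ← Complex.exp_add, ← Complex.exp_add]
  congr 1
  rw [inner_add_left]
  push_cast
  ring


/-! ### Shift inequality for the Dalang weight -/

lemma integrable_dalang {d : ℕ} {μ : Measure (Ed d)}
    (hD : ∫⁻ ξ, ENNReal.ofReal (1 / (1 + ‖ξ‖ ^ 2)) ∂μ < ⊤) :
    Integrable (fun ξ : Ed d => 1 / (1 + ‖ξ‖ ^ 2)) μ := by
  refine (lintegral_ofReal_ne_top_iff_integrable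
    (by fun_prop : Measurable _).aestronglyMeasurable ?_).1 hD.ne
  exact Filter.Eventually.of_forall fun ξ => by positivity

/-- A translated Gaussian is dominated by a multiple of `1/(1+|ξ|²)`, the multiple depending on the
translation. -/
lemma integrable_gauss {d : ℕ} {μ : Measure (Ed d)}
    (hD : ∫⁻ ξ, ENNReal.ofReal (1 / (1 + ‖ξ‖ ^ 2)) ∂μ < ⊤) {s : ℝ} (hs : 0 < s) (η : Ed d) :
    Integrable (fun ξ : Ed d => Real.exp (-s * ‖ξ + η‖ ^ 2)) μ := by
  refine ((integrable_dalang hD).const_mul (1 + 2 * ‖η‖ ^ 2 + 2 / s)).mono'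
    (by fun_prop) (Filter.Eventually.of_forall fun ξ => ?_)
  rw [Real.norm_of_nonneg (Real.exp_pos _).le]
  set y := ‖ξ + η‖ ^ 2 with hy
  have hy0 : 0 ≤ y := by positivity
  have h1 : ‖ξ‖ ^ 2 ≤ 2 * y + 2 * ‖η‖ ^ 2 := by
    have h2 : ‖ξ‖ ≤ ‖ξ + η‖ + ‖η‖ := by
      simpa using norm_sub_le (ξ + η) η
    nlinarith [sq_nonneg (‖ξ + η‖ - ‖η‖), norm_nonneg ξ, norm_nonneg η, norm_nonneg (ξ + η)]
  have h3 : Real.exp (-s * y) ≤ 1 / (1 + s * y) := by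
    rw [neg_mul, Real.exp_neg, ← one_div]
    apply one_div_le_one_div_of_le (by positivity)
    linarith [Real.add_one_le_exp (s * y)]
  refine h3.trans ?_
  rw [mul_one_div, div_le_div_iff₀ (by positivity) (by positivity)]
  have h4 : 2 / s * (s * y) = 2 * y := by field_simp
  nlinarith [mul_nonneg hs.le hy0, mul_nonneg (sq_nonneg ‖η‖) (mul_nonneg hs.le hy0),
    div_pos (two_pos : (0:ℝ) < 2) hs]

/-- The Gaussian integral `∫ e^{-s|ξ+η|²} μ(dξ)` is maximal at `η = 0`. By Parseval it is a positive
multiple of the integral of `f` against a modulated Gaussian, and `f ≥ 0`, so the triangle inequality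
removes the modulation. -/
lemma lintegral_gauss_shift_le {d : ℕ} {μ : Measure (Ed d)} {f : Ed d → ℝ≥0∞}
    (hP : ParsevalFT d f μ)
    (hD : ∫⁻ ξ, ENNReal.ofReal (1 / (1 + ‖ξ‖ ^ 2)) ∂μ < ⊤) {s : ℝ} (hs : 0 < s) (η : Ed d) :
    ∫⁻ ξ, ENNReal.ofReal (Real.exp (-s * ‖ξ + η‖ ^ 2)) ∂μ
      ≤ ∫⁻ ξ, ENNReal.ofReal (Real.exp (-s * ‖ξ‖ ^ 2)) ∂μ := by
  have hJ : ∀ η : Ed d, ∫⁻ ξ, ENNReal.ofReal (Real.exp (-s * ‖ξ + η‖ ^ 2)) ∂μ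
      = ENNReal.ofReal (∫ ξ, Real.exp (-s * ‖ξ + η‖ ^ 2) ∂μ) := fun η =>
    (ofReal_integral_eq_lintegral_ofReal (integrable_gauss hD hs η)
      (Filter.Eventually.of_forall fun ξ => (Real.exp_pos _).le)).symm
  have hJ0 := hJ 0
  simp only [add_zero] at hJ0
  rw [hJ, hJ0]
  apply ENNReal.ofReal_le_ofReal
  set b : ℝ := 1 / (4 * s) with hbdef
  have hb : 0 < b := by positivity
  have hsb : 1 / (4 * b) = s := by rw [hbdef]; field_simp
  set A : ℂ := (((2 * π) ^ d : ℝ)⁻¹ : ℂ) * ((π : ℂ) / b) ^ (d / 2 : ℂ) with hA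
  have hA0 : 0 < ‖A‖ := by
    rw [norm_pos_iff, hA]
    refine mul_ne_zero (inv_ne_zero ?_) ?_
    · exact_mod_cast (by positivity : (2 * π) ^ d ≠ 0)
    · rw [Complex.cpow_def_of_ne_zero]
      · exact Complex.exp_ne_zero _
      · exact div_ne_zero (by exact_mod_cast Real.pi_ne_zero) (by exact_mod_cast hb.ne')
  have key : ∀ η : Ed d, ∫ x, modGauss d b hb η x * (((f x).toReal : ℝ) : ℂ)
      = A * ((∫ ξ, Real.exp (-s * ‖ξ + η‖ ^ 2) ∂μ : ℝ) : ℂ) := by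
    intro η
    rw [hP (modGauss d b hb η)]
    simp_rw [FTd_modGauss, hsb]
    rw [integral_const_mul, integral_complex_ofReal, hA, mul_assoc]
  have k0 := key 0
  simp only [add_zero, modGauss_zero] at k0
  -- No integrability of `f` against the Gaussian is needed: if it fails, both sides are `0`.
  have hn : ‖∫ x, modGauss d b hb η x * (((f x).toReal : ℝ) : ℂ)‖
      ≤ ‖∫ x, ((Real.exp (-b * ‖x‖ ^ 2) : ℝ) : ℂ) * (((f x).toReal : ℝ) : ℂ)‖ := by
    refine (norm_integral_le_integral_norm _).trans ?_
    simp_rw [norm_mul, norm_modGauss, ← Complex.ofReal_mul]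
    rw [integral_complex_ofReal, Complex.norm_real]
    refine le_trans (le_of_eq ?_) (le_abs_self _)
    congr 1
    funext x
    rw [Complex.norm_real, Real.norm_of_nonneg ENNReal.toReal_nonneg]
  rw [key, k0, norm_mul A, norm_mul A, Complex.norm_real, Complex.norm_real,
    Real.norm_of_nonneg (integral_nonneg fun _ => (Real.exp_pos _).le),
    Real.norm_of_nonneg (integral_nonneg fun _ => (Real.exp_pos _).le)] at hn
  exact le_of_mul_le_mul_left hn hA0

/-- `1/(1+y)` as a mixture of exponentials, `∫_0^∞ e^{-s} e^{-sy} ds`. -/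
lemma ofReal_one_div_eq_lintegral {y : ℝ} (hy : 0 ≤ y) :
    ENNReal.ofReal (1 / (1 + y)) =
      ∫⁻ s in Set.Ioi (0 : ℝ), ENNReal.ofReal (Real.exp (-s)) *
        ENNReal.ofReal (Real.exp (-s * y)) := by
  have h1 : (-(1 + y)) < 0 := by linarith
  have h := integral_exp_mul_Ioi h1 0
  have hi := integrableOn_exp_mul_Ioi h1 0
  rw [mul_zero, Real.exp_zero, neg_div_neg_eq] at h
  rw [← h, ofReal_integral_eq_lintegral_ofReal hi
    (Filter.Eventually.of_forall fun s => (Real.exp_pos _).le)]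
  congr 1
  funext s
  rw [← ENNReal.ofReal_mul (Real.exp_pos _).le, ← Real.exp_add]
  ring_nf

lemma sigmaFinite_of_dalang {d : ℕ} {μ : Measure (Ed d)}
    (hD : ∫⁻ ξ, ENNReal.ofReal (1 / (1 + ‖ξ‖ ^ 2)) ∂μ < ⊤) : SigmaFinite μ := by
  have : IsFiniteMeasureOnCompacts μ := by
    refine ⟨fun K hK => ?_⟩
    obtain ⟨R, hR⟩ := hK.isBounded.exists_norm_le
    have hc : (0:ℝ) < 1 / (1 + R ^ 2) := by positivity
    have h1 := mul_meas_ge_le_lintegral₀ (μ := μ)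
      (f := fun ξ : Ed d => ENNReal.ofReal (1 / (1 + ‖ξ‖ ^ 2))) (by fun_prop)
      (ENNReal.ofReal (1 / (1 + R ^ 2)))
    have h2 : K ⊆ {x : Ed d | ENNReal.ofReal (1 / (1 + R ^ 2))
        ≤ ENNReal.ofReal (1 / (1 + ‖x‖ ^ 2))} := by
      intro x hx
      apply ENNReal.ofReal_le_ofReal
      have := hR x hx
      gcongr
    refine lt_of_le_of_lt (measure_mono h2) ?_
    exact (ENNReal.lt_top_of_mul_ne_top_right (h1.trans_lt hD).ne (by simpa using hc))
  infer_instance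

/-- The Dalang weight `η ↦ 1/(1+|η|²)`, with values in `[0,∞]`. -/
def dw {d : ℕ} (η : Ed d) : ℝ≥0∞ := ENNReal.ofReal (1 / (1 + ‖η‖ ^ 2))

lemma measurable_dw {d : ℕ} : Measurable (dw (d := d)) := by
  unfold dw; fun_prop

/-- Translating the Dalang weight does not increase its `μ`-integral: it is a mixture of Gaussians,
each of which has this property. -/
lemma lintegral_dw_shift_le {d : ℕ} {μ : Measure (Ed d)} {f : Ed d → ℝ≥0∞}
    (hP : ParsevalFT d f μ)
    (hD : ∫⁻ ξ, ENNReal.ofReal (1 / (1 + ‖ξ‖ ^ 2)) ∂μ < ⊤) (η : Ed d) :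
    ∫⁻ ξ, dw (ξ + η) ∂μ ≤ ∫⁻ ξ, dw ξ ∂μ := by
  have := sigmaFinite_of_dalang hD
  have hs : ∀ η : Ed d, ∫⁻ ξ, dw (ξ + η) ∂μ = ∫⁻ s in Set.Ioi (0 : ℝ),
      ENNReal.ofReal (Real.exp (-s)) *
        ∫⁻ ξ, ENNReal.ofReal (Real.exp (-s * ‖ξ + η‖ ^ 2)) ∂μ := by
    intro η
    unfold dw
    simp_rw [ofReal_one_div_eq_lintegral (sq_nonneg _)]
    rw [lintegral_lintegral_swap (by fun_prop)]
    congr 1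
    funext s
    rw [lintegral_const_mul _ (by fun_prop)]
  have h0 := hs 0
  simp only [add_zero] at h0
  rw [hs, h0]
  refine setLIntegral_mono' measurableSet_Ioi fun s hs => ?_
  exact mul_le_mul' le_rfl (lintegral_gauss_shift_le hP hD hs η)


/-! ### Integrating out the frequencies along a chain -/

lemma measurable_chain {d n : ℕ} (ρ : Equiv.Perm (Fin n)) :
    Measurable fun ξ : Fin n → Ed d => ∏ j : Fin n, dw (∑ i ∈ Finset.Iic j, ξ (ρ i)) :=
  Finset.measurable_fun_prod _ fun j _ => measurable_dw.comp (by fun_prop)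

/-- Tonelli on a power of a measure, with the last coordinate integrated first. -/
lemma lintegral_pi_last {X : Type*} [MeasurableSpace X] (ν : Measure X) [SigmaFinite ν] {n : ℕ}
    {F : (Fin (n + 1) → X) → ℝ≥0∞} (hF : Measurable F) :
    ∫⁻ x, F x ∂(Measure.pi fun _ : Fin (n + 1) => ν) =
      ∫⁻ g, ∫⁻ x, F (Fin.snoc (α := fun _ => X) g x) ∂ν ∂(Measure.pi fun _ : Fin n => ν) := by
  have h := (measurePreserving_piFinSuccAbove (fun _ : Fin (n + 1) => ν) (Fin.last n)).symm
  rw [← h.lintegral_comp hF, lintegral_prod_symm' (fun a => F _)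
    (hF.comp (MeasurableEquiv.measurable _))]
  congr 1
  funext g
  congr 1
  funext x
  congr 1
  change Fin.insertNth (α := fun _ => X) (Fin.last n) x g = _
  rw [Fin.insertNth_last']

/-- Only the last partial sum contains the last frequency, so integrating that frequency first costs a
factor `K`, uniformly in the others; induction does the rest. -/
lemma lintegral_chain_le {d : ℕ} {μ : Measure (Ed d)} [SigmaFinite μ] {K : ℝ≥0∞}
    (hK : ∀ η : Ed d, ∫⁻ ξ, dw (ξ + η) ∂μ ≤ K) (n : ℕ) :
    ∫⁻ ξ, ∏ j : Fin n, dw (∑ i ∈ Finset.Iic j, ξ i) ∂(Measure.pi fun _ : Fin n => μ) ≤ K ^ n := by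
  induction n with
  | zero => simp
  | succ n ih =>
    rw [lintegral_pi_last μ (by simpa using measurable_chain (d := d) (1 : Equiv.Perm (Fin (n + 1))))]
    have hs : ∀ (g : Fin n → Ed d) (x : Ed d) (j : Fin n),
        ∑ i ∈ Finset.Iic j.castSucc, Fin.snoc (α := fun _ => Ed d) g x i
          = ∑ i ∈ Finset.Iic j, g i := by
      intro g x j
      rw [← Fin.map_castSuccEmb_Iic, Finset.sum_map]
      simp
    have hl : ∀ (g : Fin n → Ed d) (x : Ed d),
        ∑ i ∈ Finset.Iic (Fin.last n), Fin.snoc (α := fun _ => Ed d) g x i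
          = x + ∑ i, g i := by
      intro g x
      have : Finset.Iic (Fin.last n) = Finset.univ := by
        ext i; simp [Fin.le_last]
      rw [this, Fin.sum_univ_castSucc, add_comm]
      simp
    simp_rw [Fin.prod_univ_castSucc, hs, hl]
    calc _ = ∫⁻ g, (∏ j : Fin n, dw (∑ i ∈ Finset.Iic j, g i)) * ∫⁻ x, dw (x + ∑ i, g i) ∂μ
            ∂(Measure.pi fun _ : Fin n => μ) := by
          congr 1
          funext g
          exact lintegral_const_mul _ (measurable_dw.comp (measurable_add_const _))
      _ ≤ ∫⁻ g, (∏ j : Fin n, dw (∑ i ∈ Finset.Iic j, g i)) * K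
            ∂(Measure.pi fun _ : Fin n => μ) :=
          lintegral_mono fun g => mul_le_mul' le_rfl (hK _)
      _ = (∫⁻ g, (∏ j : Fin n, dw (∑ i ∈ Finset.Iic j, g i))
            ∂(Measure.pi fun _ : Fin n => μ)) * K :=
          lintegral_mul_const _ (by simpa using measurable_chain (d := d) (1 : Equiv.Perm (Fin n)))
      _ ≤ _ := by rw [pow_succ]; exact mul_le_mul' ih le_rfl

lemma lintegral_chain_perm_le {d : ℕ} {μ : Measure (Ed d)} [SigmaFinite μ] {K : ℝ≥0∞}
    (hK : ∀ η : Ed d, ∫⁻ ξ, dw (ξ + η) ∂μ ≤ K) {n : ℕ} (ρ : Equiv.Perm (Fin n)) :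
    ∫⁻ ξ, ∏ j : Fin n, dw (∑ i ∈ Finset.Iic j, ξ (ρ i)) ∂(Measure.pi fun _ : Fin n => μ)
      ≤ K ^ n := by
  have h := measurePreserving_piCongrLeft (α := fun _ => Ed d) (fun _ : Fin n => μ) ρ
  rw [← h.lintegral_comp (measurable_chain ρ)]
  simp_rw [MeasurableEquiv.coe_piCongrLeft, Equiv.piCongrLeft_apply_apply]
  exact lintegral_chain_le hK n

/-! ### Time integrals -/

lemma lintegral_pi_prod_le {X : Type*} [MeasurableSpace X] (ν : Measure X) [SigmaFinite ν]
    {G : ℝ≥0∞} {n : ℕ} {g : Fin n → X → ℝ≥0∞} (hg : ∀ j, Measurable (g j))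
    (hG : ∀ j, ∫⁻ x, g j x ∂ν ≤ G) :
    ∫⁻ x, ∏ j, g j (x j) ∂(Measure.pi fun _ : Fin n => ν) ≤ G ^ n := by
  induction n with
  | zero => simp
  | succ n ih =>
    rw [lintegral_pi_last ν (by fun_prop)]
    simp only [Fin.prod_univ_castSucc, Fin.snoc_castSucc, Fin.snoc_last]
    calc _ = ∫⁻ y : Fin n → X, (∏ j : Fin n, g j.castSucc (y j)) * ∫⁻ x, g (Fin.last n) x ∂ν
            ∂(Measure.pi fun _ : Fin n => ν) := by
          congr 1
          funext y
          rw [lintegral_const_mul _ (hg _)]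
      _ = (∫⁻ y : Fin n → X, (∏ j : Fin n, g j.castSucc (y j))
            ∂(Measure.pi fun _ : Fin n => ν)) * ∫⁻ x, g (Fin.last n) x ∂ν :=
          lintegral_mul_const _ (by fun_prop)
      _ ≤ _ := by
          rw [pow_succ]
          exact mul_le_mul' (ih (fun j => hg _) fun j => hG _) (hG _)

lemma volume_restrict_TBox (n : ℕ) (t : ℝ) :
    (volume : Measure (Fin n → ℝ)).restrict (TBox n t)
      = Measure.pi fun _ : Fin n => volume.restrict (Set.Icc (0 : ℝ) t) := by
  rw [TBox, volume_pi, Measure.restrict_pi_pi]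

lemma lintegral_gamma_le {γ : ℝ → ℝ≥0∞} {t a : ℝ} (ha : a ∈ Set.Icc 0 t) :
    ∫⁻ s in Set.Icc 0 t, γ (a - s) ≤ ∫⁻ u in Set.Icc (-t) t, γ u := by
  rw [← lintegral_indicator measurableSet_Icc, ← lintegral_indicator measurableSet_Icc,
    ← lintegral_sub_left_eq_self ((Set.Icc (-t) t).indicator γ) a]
  refine lintegral_mono fun s => ?_
  by_cases hs : s ∈ Set.Icc 0 t
  · have h : a - s ∈ Set.Icc (-t) t := ⟨by linarith [ha.1, hs.2], by linarith [ha.2, hs.1]⟩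
    rw [Set.indicator_of_mem hs, Set.indicator_of_mem h]
  · simp [Set.indicator_of_notMem hs]

/-- For fixed `ts`, the integral over `ss` factorises into `n` integrals of `γ` over subintervals of
`[-t,t]`. -/
lemma lintegral_gamma_box_le {γ : ℝ → ℝ≥0∞} (hγm : Measurable γ) {t : ℝ} (n : ℕ) :
    ∫⁻ ts in TBox n t, ∫⁻ ss in TBox n t, ∏ j, γ (ts j - ss j)
      ≤ (∫⁻ u in Set.Icc (-t) t, γ u) ^ n * ENNReal.ofReal t ^ n := by
  have hm : MeasurableSet (TBox n t) := MeasurableSet.univ_pi fun _ => measurableSet_Icc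
  calc _ ≤ ∫⁻ ts in TBox n t, (∫⁻ u in Set.Icc (-t) t, γ u) ^ n := by
        refine setLIntegral_mono' hm fun ts hts => ?_
        rw [volume_restrict_TBox]
        exact lintegral_pi_prod_le _ (g := fun j s => γ (ts j - s))
          (fun j => hγm.comp (by fun_prop))
          fun j => lintegral_gamma_le (hts j (Set.mem_univ j))
    _ = _ := by
        rw [setLIntegral_const]
        congr 1
        rw [TBox, volume_pi_pi]
        simp

/-! ### Measurability of the sorting permutation -/

/-- `Tuple.sort` breaks ties by index, so `Tuple.sort ts = ρ` is a finite conjunction of inequalities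
and non-equalities between coordinates of `ts`. -/
lemma measurableSet_sort_eq {n : ℕ} (ρ : Equiv.Perm (Fin n)) :
    MeasurableSet {ts : Fin n → ℝ | Tuple.sort ts = ρ} := by
  have : {ts : Fin n → ℝ | Tuple.sort ts = ρ} =
      (⋂ i, ⋂ j, ⋂ _ : i ≤ j, {ts : Fin n → ℝ | ts (ρ i) ≤ ts (ρ j)}) ∩
      ⋂ i, ⋂ j, ⋂ _ : i < j, ⋂ _ : ¬ ρ i < ρ j, {ts : Fin n → ℝ | ts (ρ i) = ts (ρ j)}ᶜ := by
    ext ts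
    simp only [Set.mem_ofPred_eq, eq_comm (a := Tuple.sort ts), Tuple.eq_sort_iff, Monotone,
      Function.comp_apply, Set.mem_inter_iff, Set.mem_iInter, Set.mem_compl_iff]
    refine and_congr Iff.rfl ?_
    refine forall_congr' fun i => forall_congr' fun j => forall_congr' fun _ => ?_
    tauto
  rw [this]
  refine MeasurableSet.inter ?_ ?_
  · refine .iInter fun i => .iInter fun j => .iInter fun _ => ?_
    exact measurableSet_le (by fun_prop) (by fun_prop)
  · refine .iInter fun i => .iInter fun j => .iInter fun _ => .iInter fun _ => ?_
    exact (measurableSet_eq_fun (by fun_prop) (by fun_prop)).compl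

/-- The product over `j` of the Dalang weights of the partial sums `ξ_{ρ(1)} + … + ξ_{ρ(j)}`, with `ρ`
the sorting permutation of `ts`. -/
def chainWeight {d n : ℕ} (ts : Fin n → ℝ) (ξ : Fin n → Ed d) : ℝ≥0∞ :=
  ∏ j : Fin n, dw (∑ i ∈ Finset.Iic j, ξ (Tuple.sort ts i))

/-- A function chosen measurably from a countable family of measurable functions is jointly
measurable. -/
lemma measurable_select {X Y ι : Type*} [MeasurableSpace X] [MeasurableSpace Y] [Countable ι]
    {S : X → ι} (hS : ∀ i, MeasurableSet (S ⁻¹' {i})) {F : ι → Y → ℝ≥0∞}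
    (hF : ∀ i, Measurable (F i)) : Measurable fun p : X × Y => F (S p.1) p.2 := by
  let _ : MeasurableSpace ι := ⊤
  have h1 : Measurable S := measurable_to_countable' hS
  have h2 : Measurable fun p : ι × Y => F p.1 p.2 := measurable_from_prod_countable_right hF
  exact h2.comp ((h1.comp measurable_fst).prodMk measurable_snd)

lemma measurable_chainWeight {d n : ℕ} :
    Measurable fun p : (Fin n → ℝ) × (Fin n → Ed d) => chainWeight p.1 p.2 :=
  measurable_select (S := fun ts : Fin n → ℝ => Tuple.sort ts)
    (F := fun ρ (ξ : Fin n → Ed d) => ∏ j : Fin n, dw (∑ i ∈ Finset.Iic j, ξ (ρ i)))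
    (fun ρ => measurableSet_sort_eq ρ) fun ρ => measurable_chain ρ

/-! ### Bound on the chaos coefficients -/

/-- Both `|sin(ar)/r| ≤ |a|` and `|sin(ar)| ≤ 1` are used, for small and for large `r`. -/
lemma sinc_sq_le {t a r : ℝ} (ha : |a| ≤ t) :
    _root_.sinc a r ^ 2 ≤ (1 + t ^ 2) * (1 / (1 + r ^ 2)) := by
  rw [mul_one_div, le_div_iff₀ (by positivity)]
  have hat : a ^ 2 ≤ t ^ 2 := sq_le_sq' (by linarith [neg_abs_le a]) (by linarith [le_abs_self a])
  unfold _root_.sinc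
  split_ifs with h
  · subst h; nlinarith
  · have h1 : (Real.sin (a * r) / r) ^ 2 * r ^ 2 ≤ 1 := by
      rw [div_pow, div_mul_cancel₀ _ (pow_ne_zero _ h)]
      exact Real.sin_sq_le_one _
    have h2 : (Real.sin (a * r) / r) ^ 2 ≤ a ^ 2 := by
      rw [div_pow, div_le_iff₀ (by positivity), ← mul_pow]
      exact sq_le_sq.2 Real.abs_sin_le_abs
    nlinarith

lemma Phi_sq_le {d n : ℕ} {t : ℝ} {ts : Fin n → ℝ} (hts : ts ∈ TBox n t) (ξ : Fin n → Ed d) :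
    ENNReal.ofReal (Phi d n t ts ξ ^ 2)
      ≤ ENNReal.ofReal (1 + t ^ 2) ^ n * chainWeight ts ξ := by
  have hb : ∀ i, 0 ≤ ts i ∧ ts i ≤ t := fun i => hts i (Set.mem_univ i)
  have h : Phi d n t ts ξ ^ 2 ≤ ∏ j : Fin n, ((1 + t ^ 2) *
      (1 / (1 + ‖∑ i ∈ Finset.Iic j, ξ (Tuple.sort ts i)‖ ^ 2))) := by
    rw [Phi, ← Finset.prod_pow]
    refine Finset.prod_le_prod (fun _ _ => sq_nonneg _) fun j _ => sinc_sq_le ?_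
    rw [abs_le]
    have h1 := hb (Tuple.sort ts j)
    split_ifs with hj
    · have h2 := hb (Tuple.sort ts ⟨(j : ℕ) + 1, hj⟩)
      constructor <;> linarith
    · constructor <;> linarith
  refine (ENNReal.ofReal_le_ofReal h).trans_eq ?_
  rw [ENNReal.ofReal_prod_of_nonneg fun _ _ => by positivity]
  simp_rw [ENNReal.ofReal_mul (by positivity : 0 ≤ 1 + t ^ 2)]
  rw [Finset.prod_mul_distrib]
  simp [chainWeight, dw]

/-- Pointwise bound on the integrand of `alphaHAM`, from `|Φ Φ'| ≤ Φ² + Φ'²`; it decouples the two time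
vectors in the frequency integral. -/
lemma enorm_integrand_le {d n : ℕ} {γ : ℝ → ℝ≥0∞} {t : ℝ} {ts ss : Fin n → ℝ}
    (hts : ts ∈ TBox n t) (hss : ss ∈ TBox n t) (ξ : Fin n → Ed d) :
    ‖(∏ j : Fin n, (γ (ts j - ss j)).toReal) * (Phi d n t ts ξ * Phi d n t ss ξ)‖ₑ
      ≤ ENNReal.ofReal (1 + t ^ 2) ^ n *
        ((∏ j, γ (ts j - ss j)) * (chainWeight ts ξ + chainWeight ss ξ)) := by
  rw [enorm_mul]
  have h1 : ‖∏ j : Fin n, (γ (ts j - ss j)).toReal‖ₑ ≤ ∏ j, γ (ts j - ss j) := by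
    rw [Real.enorm_of_nonneg (Finset.prod_nonneg fun _ _ => ENNReal.toReal_nonneg),
      ENNReal.ofReal_prod_of_nonneg fun _ _ => ENNReal.toReal_nonneg]
    exact Finset.prod_le_prod' fun _ _ => ENNReal.ofReal_toReal_le
  have h2 : ‖Phi d n t ts ξ * Phi d n t ss ξ‖ₑ
      ≤ ENNReal.ofReal (1 + t ^ 2) ^ n * (chainWeight ts ξ + chainWeight ss ξ) := by
    rw [Real.enorm_eq_ofReal_abs, mul_add]
    refine le_trans ?_ (add_le_add (Phi_sq_le hts ξ) (Phi_sq_le hss ξ))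
    rw [← ENNReal.ofReal_add (sq_nonneg _) (sq_nonneg _)]
    apply ENNReal.ofReal_le_ofReal
    rw [abs_le]
    constructor <;>
      nlinarith [sq_nonneg (Phi d n t ts ξ + Phi d n t ss ξ),
        sq_nonneg (Phi d n t ts ξ - Phi d n t ss ξ), sq_nonneg (Phi d n t ts ξ),
        sq_nonneg (Phi d n t ss ξ)]
  refine (mul_le_mul' h1 h2).trans_eq ?_
  ring

/-- Tonelli moves the frequency integral inside; there it is at most `2L` for every pair of time
vectors, and only the integral of the products of `γ` remains. -/
lemma lintegral_chaos_le {Y : Type*} [MeasurableSpace Y] {ν : Measure Y} [SFinite ν] {n : ℕ}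
    {γ : ℝ → ℝ≥0∞} (hγm : Measurable γ) {W : (Fin n → ℝ) → Y → ℝ≥0∞}
    (hW : Measurable fun p : (Fin n → ℝ) × Y => W p.1 p.2) {L : ℝ≥0∞}
    (hL : ∀ ts, ∫⁻ ξ, W ts ξ ∂ν ≤ L) (t : ℝ) :
    ∫⁻ ξ, (∫⁻ ts in TBox n t, ∫⁻ ss in TBox n t,
        ((∏ j, γ (ts j - ss j)) * (W ts ξ + W ss ξ))) ∂ν
      ≤ (∫⁻ u in Set.Icc (-t) t, γ u) ^ n * ENNReal.ofReal t ^ n * (2 * L) := by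
  have hprod : Measurable fun p : (Fin n → ℝ) × (Fin n → ℝ) => ∏ j, γ (p.1 j - p.2 j) :=
    Finset.measurable_fun_prod _ fun j _ => hγm.comp (by fun_prop)
  have hall : Measurable fun p : (Y × (Fin n → ℝ)) × (Fin n → ℝ) =>
      (∏ j, γ (p.1.2 j - p.2 j)) * (W p.1.2 p.1.1 + W p.2 p.1.1) := by
    refine Measurable.mul (hprod.comp (by fun_prop : Measurable fun
      p : (Y × (Fin n → ℝ)) × (Fin n → ℝ) => (p.1.2, p.2))) (Measurable.add ?_ ?_)
    · exact hW.comp (by fun_prop : Measurable fun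
        p : (Y × (Fin n → ℝ)) × (Fin n → ℝ) => (p.1.2, p.1.1))
    · exact hW.comp (by fun_prop : Measurable fun
        p : (Y × (Fin n → ℝ)) × (Fin n → ℝ) => (p.2, p.1.1))
  have hc : ∀ ts : Fin n → ℝ, Measurable (W ts) := fun ts => hW.comp measurable_prodMk_left
  rw [lintegral_lintegral_swap (hall.lintegral_prod_right').aemeasurable]
  calc _ = ∫⁻ ts in TBox n t, ∫⁻ ss in TBox n t, (∫⁻ ξ,
        ((∏ j, γ (ts j - ss j)) * (W ts ξ + W ss ξ)) ∂ν) := by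
        congr 1
        funext ts
        rw [lintegral_lintegral_swap]
        exact (hall.comp (by fun_prop : Measurable fun
          p : Y × (Fin n → ℝ) => ((p.1, ts), p.2))).aemeasurable
    _ ≤ ∫⁻ ts in TBox n t, ∫⁻ ss in TBox n t, (∏ j, γ (ts j - ss j)) * (2 * L) := by
        refine lintegral_mono fun ts => lintegral_mono fun ss => ?_
        change (∫⁻ ξ, (∏ j, γ (ts j - ss j)) * (W ts ξ + W ss ξ) ∂ν) ≤ _
        rw [lintegral_const_mul _ (show Measurable fun ξ => W ts ξ + W ss ξ from (hc ts).add (hc ss)),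
          lintegral_add_left (hc ts), two_mul]
        exact mul_le_mul' le_rfl (add_le_add (hL ts) (hL ss))
    _ = (∫⁻ ts in TBox n t, ∫⁻ ss in TBox n t, (∏ j, γ (ts j - ss j))) * (2 * L) := by
        rw [← lintegral_mul_const _ hprod.lintegral_prod_right']
        congr 1
        funext ts
        exact lintegral_mul_const _ (hprod.comp measurable_prodMk_left)
    _ ≤ _ := mul_le_mul' (lintegral_gamma_box_le hγm n) le_rfl

/-- Geometric bound on the chaos coefficients. The norm of a Bochner integral is at most the lower
integral of the norm whether or not the integrand is integrable, so no integrability is checked. -/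
lemma abs_alphaHAM_le {d n : ℕ} {γ : ℝ → ℝ≥0∞} (hγm : Measurable γ) (hγloc : LocIntENN1 γ)
    {μ : Measure (Ed d)} [SigmaFinite μ] {K : ℝ≥0∞} (hK : ∀ η : Ed d, ∫⁻ ξ, dw (ξ + η) ∂μ ≤ K)
    (hKtop : K ≠ ⊤) (t : ℝ) :
    |alphaHAM d n γ μ t| ≤ 2 *
      (ENNReal.ofReal (1 + t ^ 2) * (∫⁻ u in Set.Icc (-t) t, γ u) * ENNReal.ofReal t
        * K).toReal ^ n := by
  have hG : ∫⁻ u in Set.Icc (-t) t, γ u ≠ ⊤ := (hγloc _ isCompact_Icc).ne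
  have hm : MeasurableSet (TBox n t) := MeasurableSet.univ_pi fun _ => measurableSet_Icc
  set D := ENNReal.ofReal (1 + t ^ 2)
  set G := ∫⁻ u in Set.Icc (-t) t, γ u
  have hDn : D ^ n ≠ ⊤ := ENNReal.pow_ne_top ENNReal.ofReal_ne_top
  have h : ‖∫ ξ : Fin n → Ed d,
      (∫ ts in TBox n t, ∫ ss in TBox n t,
        (∏ j : Fin n, (γ (ts j - ss j)).toReal) * (Phi d n t ts ξ * Phi d n t ss ξ))
      ∂(Measure.pi fun _ : Fin n => μ)‖ₑ ≤ 2 * (D * G * ENNReal.ofReal t * K) ^ n := by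
    calc _ ≤ ∫⁻ ξ : Fin n → Ed d, (∫⁻ ts in TBox n t, ∫⁻ ss in TBox n t,
          D ^ n * ((∏ j, γ (ts j - ss j)) * (chainWeight ts ξ + chainWeight ss ξ)))
          ∂(Measure.pi fun _ : Fin n => μ) := by
          refine (enorm_integral_le_lintegral_enorm _).trans (lintegral_mono fun ξ => ?_)
          refine (enorm_integral_le_lintegral_enorm _).trans
            (setLIntegral_mono' hm fun ts hts => ?_)
          refine (enorm_integral_le_lintegral_enorm _).trans
            (setLIntegral_mono' hm fun ss hss => ?_)
          exact enorm_integrand_le hts hss ξ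
      _ = D ^ n * ∫⁻ ξ : Fin n → Ed d, (∫⁻ ts in TBox n t, ∫⁻ ss in TBox n t,
          ((∏ j, γ (ts j - ss j)) * (chainWeight ts ξ + chainWeight ss ξ)))
          ∂(Measure.pi fun _ : Fin n => μ) := by
          simp_rw [lintegral_const_mul' _ _ hDn]
      _ ≤ D ^ n * (G ^ n * ENNReal.ofReal t ^ n * (2 * K ^ n)) :=
          mul_le_mul' le_rfl (lintegral_chaos_le hγm measurable_chainWeight
            (fun ts => lintegral_chain_perm_le hK (Tuple.sort ts)) t)
      _ = _ := by rw [mul_pow, mul_pow, mul_pow]; ring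
  have htop : 2 * (D * G * ENNReal.ofReal t * K) ^ n ≠ ⊤ := by finiteness
  have h' := ENNReal.toReal_mono htop h
  rw [toReal_enorm, ENNReal.toReal_mul, ENNReal.toReal_pow, Real.norm_eq_abs] at h'
  have hpi : ((2 * π) ^ (n * d))⁻¹ ≤ 1 :=
    inv_le_one_of_one_le₀ (one_le_pow₀ (by linarith [Real.pi_gt_three]))
  rw [alphaHAM, abs_mul, abs_of_nonneg (by positivity)]
  refine (mul_le_of_le_one_left (abs_nonneg _) hpi).trans ?_
  simpa using h'

/-- Under Dalang's condition, the chaos series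
`∑_{n ≥ 1} α_n(t)/n!` of the hyperbolic Anderson model converges for every `t > 0`. -/
theorem stmt9 (d : ℕ) (γ : ℝ → ℝ≥0∞) (hγm : Measurable γ)
    (hγsym : ∀ s : ℝ, γ (-s) = γ s) (hγloc : LocIntENN1 γ)
    (μ : Measure (Ed d)) (hμt : IsTempered d μ)
    (f : Ed d → ℝ≥0∞) (hfm : Measurable f) (hfloc : LocIntENN d f)
    (hffin : ∀ x : Ed d, x ≠ 0 → f x < ⊤) (hP : ParsevalFT d f μ)
    (hDalang : ∫⁻ ξ, ENNReal.ofReal (1 / (1 + ‖ξ‖ ^ 2)) ∂μ < ⊤)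
    (t : ℝ) (ht : 0 < t) :
    Summable (fun n : ℕ => alphaHAM d (n + 1) γ μ t / ((n + 1).factorial : ℝ)) := by
  have := sigmaFinite_of_dalang hDalang
  have hα := fun n : ℕ => abs_alphaHAM_le (n := n) hγm hγloc
    (lintegral_dw_shift_le hP hDalang) hDalang.ne t
  set C := (ENNReal.ofReal (1 + t ^ 2) * (∫⁻ u in Set.Icc (-t) t, γ u) * ENNReal.ofReal t
        * ∫⁻ ξ, dw ξ ∂μ).toReal
  have hsum : Summable fun n : ℕ => 2 * (C ^ (n + 1) / ((n + 1).factorial : ℝ)) :=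
    ((summable_nat_add_iff 1).2 (Real.summable_pow_div_factorial C)).mul_left 2
  refine Summable.of_norm_bounded hsum fun n => ?_
  rw [norm_div, Real.norm_eq_abs, Real.norm_of_nonneg (by positivity), ← mul_div_assoc]
  gcongr
  exact hα (n + 1)
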